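/- Let ℓ ≥ 1, 1 ≤ i ≤ ℓ, 0 ≤ s ≤ ℓ, and let t be an integer with max{i−s, 0} ≤ t ≤ min{ℓ−s, i−1}. Then the number of (ℓ−s)-dimensional F₂-subspaces A of F₂^ℓ satisfying dim(A ∩ E_{i−1}) = dim(A ∩ E_i) = t equals [i−1 choose t]₂ · ∏_{j=0}^{ℓ−s−t−1} (2^ℓ − 2^{i+j})/(2^{ℓ−s} − 2^{t+j}) (an equality of rational numbers, the left side being the natural-number count). -/

import Mathlib

/-!
The count is a double count of adapted frames. Write `U = E_{i-1}`, `V = E_i`, `d = ℓ - s` and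
`m = d - t`. The two conditions on `A` say that `A ⊓ U = A ⊓ V` has dimension `t`, so `A` has bases
made of a `t`-tuple `x` that is independent in `U` and an `m`-tuple `y` that is independent
modulo `V`. Conversely, every such pair `(x, y)` spans a subspace `A` of the required kind
(`adapted_span`), and the pairs spanning a given `A` are those whose entries all lie in `A`
(`sup_span_eq_iff`), for dimension reasons.

Both the number of all pairs and the number of pairs in a fixed `A` come from one lemma,
`card_indepMod`: the number of `k`-tuples in `B` that are independent modulo `V` is
`∏_{j<k} (2^{dim B} - 2^{dim (B ⊓ V) + j})`. The second number does not depend on `A`, so the number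
of subspaces is the quotient of the two.
-/

open scoped Classical

noncomputable section

/-- `E_j`: the span of the first `j` standard basis vectors of `F₂^ℓ`. -/
def Ej (ℓ j : ℕ) : Submodule (ZMod 2) (Fin ℓ → ZMod 2) :=
  Submodule.span (ZMod 2) {v | ∃ k : Fin ℓ, (k : ℕ) < j ∧ v = Pi.single k 1}

/-- The average conditional erasure probability `p_{i|s}` (with `i` 1-indexed): the fraction
of `(ℓ-s)`-dimensional subspaces `R` of `F₂^ℓ` with `R ∩ (E_i \ E_{i-1}) = ∅`. -/
def pis (ℓ i s : ℕ) : ℝ :=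
  (Nat.card {R : Submodule (ZMod 2) (Fin ℓ → ZMod 2) //
      Module.finrank (ZMod 2) ↥R = ℓ - s ∧
      (R : Set (Fin ℓ → ZMod 2)) ∩ ((Ej ℓ i : Set (Fin ℓ → ZMod 2)) \
        (Ej ℓ (i - 1) : Set (Fin ℓ → ZMod 2))) = ∅} : ℝ) /
  (Nat.card {R : Submodule (ZMod 2) (Fin ℓ → ZMod 2) //
      Module.finrank (ZMod 2) ↥R = ℓ - s} : ℝ)

/-- The 2-Gaussian binomial coefficient `[a choose t]₂`, as a real number. -/
def gaussBinom (a t : ℕ) : ℝ :=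
  ∏ j ∈ Finset.range t, ((2 ^ a - 2 ^ j : ℝ) / (2 ^ t - 2 ^ j : ℝ))

/-- The average erasure probability `F_i(z)` of the `i`-th bit-channel (`i` 1-indexed). -/
def Favg (ℓ i : ℕ) (z : ℝ) : ℝ :=
  ∑ s ∈ Finset.range (ℓ + 1), (Nat.choose ℓ s : ℝ) * z ^ s * (1 - z) ^ (ℓ - s) * pis ℓ i s

section Frames

open Module Submodule

variable {F : Type*} [AddCommGroup F] [Module (ZMod 2) F] [Fintype F]

/-- The `k`-tuples of vectors of `B` that are linearly independent modulo `V`. The subspace `V`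
need not be contained in `B`; taking `V = ⊥` gives the linearly independent tuples in `B`. -/
def indepMod (k : ℕ) (B V : Submodule (ZMod 2) F) : Finset (Fin k → F) :=
  Finset.univ.filter fun v => (∀ j, v j ∈ B) ∧ LinearIndependent (ZMod 2) (V.mkQ ∘ v)

theorem mem_indepMod {k : ℕ} {B V : Submodule (ZMod 2) F} {v : Fin k → F} :
    v ∈ indepMod k B V ↔ (∀ j, v j ∈ B) ∧ LinearIndependent (ZMod 2) (V.mkQ ∘ v) := by
  simp [indepMod]

theorem span_le_of_mem {k : ℕ} {B V : Submodule (ZMod 2) F} {v : Fin k → F}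
    (h : v ∈ indepMod k B V) : span (ZMod 2) (Set.range v) ≤ B := by
  rw [span_le]
  rintro _ ⟨j, rfl⟩
  exact (mem_indepMod.1 h).1 j

theorem finrank_span_of_mem {k : ℕ} {B V : Submodule (ZMod 2) F} {v : Fin k → F}
    (h : v ∈ indepMod k B V) : finrank (ZMod 2) (span (ZMod 2) (Set.range v)) = k := by
  have := (mem_indepMod.1 h).2.of_comp
  simpa using finrank_span_eq_card this

theorem disjoint_of_mem {k : ℕ} {B V : Submodule (ZMod 2) F} {v : Fin k → F}
    (h : v ∈ indepMod k B V) : Disjoint (span (ZMod 2) (Set.range v)) V := by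
  simpa using Submodule.range_ker_disjoint (mem_indepMod.1 h).2

theorem finrank_sup_of_disjoint {S T : Submodule (ZMod 2) F} (h : Disjoint S T) :
    finrank (ZMod 2) ↥(S ⊔ T) = finrank (ZMod 2) S + finrank (ZMod 2) T := by
  have := finrank_sup_add_finrank_inf_eq S T
  rw [h.eq_bot, finrank_bot] at this
  omega

theorem card_filter_mem (S : Submodule (ZMod 2) F) :
    (Finset.univ.filter fun x => x ∈ S).card = 2 ^ finrank (ZMod 2) S := by
  have := Module.card_eq_pow_finrank (K := ZMod 2) (V := S)
  rw [ZMod.card] at this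
  rw [← this, Fintype.card_subtype]

/-- The vectors of `B` extending a given tuple `v` that is independent modulo `V` are those outside
`B ⊓ (V ⊔ span v)`, which is `(B ⊓ V) ⊔ span v` by modularity. -/
theorem card_extend {k : ℕ} {B V : Submodule (ZMod 2) F} {v : Fin k → F}
    (h : v ∈ indepMod k B V) :
    ((Finset.univ.filter fun x => x ∈ B ∧ x ∉ V ⊔ span (ZMod 2) (Set.range v)).card : ℝ) =
      2 ^ finrank (ZMod 2) B - 2 ^ (finrank (ZMod 2) ↥(B ⊓ V) + k) := by
  have hmod : B ⊓ (V ⊔ span (ZMod 2) (Set.range v)) = (B ⊓ V) ⊔ span (ZMod 2) (Set.range v) :=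
    (inf_sup_assoc_of_le V (span_le_of_mem h)).symm
  have hdim : finrank (ZMod 2) ↥(B ⊓ (V ⊔ span (ZMod 2) (Set.range v))) =
      finrank (ZMod 2) ↥(B ⊓ V) + k := by
    rw [hmod, finrank_sup_of_disjoint ((disjoint_of_mem h).symm.mono_left inf_le_right),
      finrank_span_of_mem h]
  have hsum := Finset.card_filter_add_card_filter_not (s := Finset.univ.filter fun x => x ∈ B)
    (fun x => x ∈ V ⊔ span (ZMod 2) (Set.range v))
  rw [Finset.filter_filter, Finset.filter_filter, card_filter_mem] at hsum
  have h1 := card_filter_mem (B ⊓ (V ⊔ span (ZMod 2) (Set.range v)))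
  simp only [mem_inf (p := B)] at h1
  rw [h1, hdim] at hsum
  rw [eq_sub_iff_add_eq']
  exact_mod_cast hsum

theorem snoc_mem_indepMod {k : ℕ} {B V : Submodule (ZMod 2) F} {v : Fin k → F} {x : F} :
    (Fin.snoc v x : Fin (k + 1) → F) ∈ indepMod (k + 1) B V ↔
      v ∈ indepMod k B V ∧ x ∈ B ∧ x ∉ V ⊔ span (ZMod 2) (Set.range v) := by
  have hcomp : V.mkQ ∘ (Fin.snoc v x : Fin (k + 1) → F) =
      (Fin.snoc (V.mkQ ∘ v) (V.mkQ x) : Fin (k + 1) → F ⧸ V) := Fin.comp_snoc _ _ _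
  have hspan : V.mkQ x ∈ span (ZMod 2) (Set.range (V.mkQ ∘ v)) ↔
      x ∈ V ⊔ span (ZMod 2) (Set.range v) := by
    rw [Set.range_comp, ← map_span, ← mem_comap, comap_map_mkQ]
  rw [mem_indepMod, mem_indepMod, hcomp, linearIndependent_finSnoc, hspan, Fin.forall_fin_succ']
  simp only [Fin.snoc_castSucc, Fin.snoc_last]
  tauto

/-- No bound on `k` is needed: for `k` too large both sides vanish. -/
theorem card_indepMod (k : ℕ) (B V : Submodule (ZMod 2) F) :
    ((indepMod k B V).card : ℝ) =
      ∏ j ∈ Finset.range k,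
        ((2 : ℝ) ^ finrank (ZMod 2) B - 2 ^ (finrank (ZMod 2) ↥(B ⊓ V) + j)) := by
  induction k with
  | zero =>
    have : indepMod 0 B V = Finset.univ := by
      ext v
      simp only [mem_indepMod, Finset.mem_univ, iff_true]
      exact ⟨fun j => j.elim0, linearIndependent_empty_type⟩
    simp [this]
  | succ k ih =>
    have hcard : (indepMod (k + 1) B V).card =
        ((indepMod k B V).sigma fun v => Finset.univ.filter fun x =>
          x ∈ B ∧ x ∉ V ⊔ span (ZMod 2) (Set.range v)).card := by
      symm
      refine Finset.card_bij (fun p _ => Fin.snoc p.1 p.2) ?_ ?_ ?_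
      · rintro ⟨v, x⟩ h
        simp only [Finset.mem_sigma, Finset.mem_filter, Finset.mem_univ, true_and] at h
        exact snoc_mem_indepMod.2 h
      · rintro ⟨v, x⟩ _ ⟨w, y⟩ _ h
        obtain ⟨rfl, rfl⟩ := Fin.snoc_injective2 h
        rfl
      · intro u hu
        rw [← Fin.snoc_init_self u] at hu
        refine ⟨⟨Fin.init u, u (Fin.last k)⟩, ?_, Fin.snoc_init_self u⟩
        simpa only [Finset.mem_sigma, Finset.mem_filter, Finset.mem_univ, true_and]
          using snoc_mem_indepMod.1 hu
    rw [hcard, Finset.card_sigma, Nat.cast_sum, Finset.sum_congr rfl fun v hv => card_extend hv,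
      Finset.sum_const, nsmul_eq_mul, ih, Finset.prod_range_succ]

/-- The span of an adapted frame meets both `U` and `V` exactly in the span of its first part. -/
theorem adapted_span {t m : ℕ} {U V : Submodule (ZMod 2) F} (hUV : U ≤ V)
    {x : Fin t → F} {y : Fin m → F} (hx : x ∈ indepMod t U ⊥) (hy : y ∈ indepMod m ⊤ V) :
    finrank (ZMod 2) ↥(span (ZMod 2) (Set.range x) ⊔ span (ZMod 2) (Set.range y)) = t + m ∧
      finrank (ZMod 2)
        ↥((span (ZMod 2) (Set.range x) ⊔ span (ZMod 2) (Set.range y)) ⊓ U) = t ∧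
      finrank (ZMod 2)
        ↥((span (ZMod 2) (Set.range x) ⊔ span (ZMod 2) (Set.range y)) ⊓ V) = t := by
  have hxU := span_le_of_mem hx
  have hdis := disjoint_of_mem hy
  have hV : (span (ZMod 2) (Set.range x) ⊔ span (ZMod 2) (Set.range y)) ⊓ V =
      span (ZMod 2) (Set.range x) := by
    rw [sup_inf_assoc_of_le _ (hxU.trans hUV), hdis.eq_bot, sup_bot_eq]
  have hU : (span (ZMod 2) (Set.range x) ⊔ span (ZMod 2) (Set.range y)) ⊓ U =
      span (ZMod 2) (Set.range x) :=
    le_antisymm ((inf_le_inf_left _ hUV).trans hV.le) (le_inf le_sup_left hxU)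
  refine ⟨?_, ?_, ?_⟩
  · rw [finrank_sup_of_disjoint (hdis.symm.mono_left (hxU.trans hUV)), finrank_span_of_mem hx,
      finrank_span_of_mem hy]
  · rw [hU, finrank_span_of_mem hx]
  · rw [hV, finrank_span_of_mem hx]

theorem sup_span_eq_iff {t m : ℕ} {U V A : Submodule (ZMod 2) F} (hUV : U ≤ V)
    (hA : finrank (ZMod 2) A = t + m)
    {x : Fin t → F} {y : Fin m → F} (hx : x ∈ indepMod t U ⊥) (hy : y ∈ indepMod m ⊤ V) :
    span (ZMod 2) (Set.range x) ⊔ span (ZMod 2) (Set.range y) = A ↔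
      (∀ j, x j ∈ A) ∧ ∀ j, y j ∈ A := by
  constructor
  · rintro rfl
    exact ⟨fun j => mem_sup_left (subset_span ⟨j, rfl⟩),
      fun j => mem_sup_right (subset_span ⟨j, rfl⟩)⟩
  · rintro ⟨h1, h2⟩
    refine eq_of_le_of_finrank_eq (sup_le ?_ ?_) ?_
    · exact span_le.2 (by rintro _ ⟨j, rfl⟩; exact h1 j)
    · exact span_le.2 (by rintro _ ⟨j, rfl⟩; exact h2 j)
    · rw [(adapted_span hUV hx hy).1, hA]

/-- The double count of pairs consisting of a subspace `A` and an adapted frame of `A`. -/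
theorem card_mul_frames {t m : ℕ} {U V : Submodule (ZMod 2) F} (hUV : U ≤ V) :
    (Nat.card {A : Submodule (ZMod 2) F // finrank (ZMod 2) A = t + m ∧
        finrank (ZMod 2) ↥(A ⊓ U) = t ∧ finrank (ZMod 2) ↥(A ⊓ V) = t} : ℝ) *
      ((∏ j ∈ Finset.range t, ((2 : ℝ) ^ t - 2 ^ j)) *
        ∏ j ∈ Finset.range m, ((2 : ℝ) ^ (t + m) - 2 ^ (t + j))) =
    (∏ j ∈ Finset.range t, ((2 : ℝ) ^ finrank (ZMod 2) U - 2 ^ j)) *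
      ∏ j ∈ Finset.range m,
        ((2 : ℝ) ^ finrank (ZMod 2) F - 2 ^ (finrank (ZMod 2) V + j)) := by
  have : Fintype (Submodule (ZMod 2) F) := Fintype.ofFinite _
  set G : Finset (Submodule (ZMod 2) F) := Finset.univ.filter fun A =>
    finrank (ZMod 2) A = t + m ∧
      finrank (ZMod 2) ↥(A ⊓ U) = t ∧ finrank (ZMod 2) ↥(A ⊓ V) = t with hG
  have hcount := Finset.card_eq_sum_card_fiberwise
    (f := fun p : (Fin t → F) × (Fin m → F) =>
      span (ZMod 2) (Set.range p.1) ⊔ span (ZMod 2) (Set.range p.2))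
    (s := indepMod t U ⊥ ×ˢ indepMod m ⊤ V) (t := G) (by
      rintro ⟨x, y⟩ h
      obtain ⟨hx, hy⟩ := Finset.mem_product.1 (Finset.mem_coe.1 h)
      simpa [hG] using adapted_span hUV hx hy)
  have hfib : ∀ A ∈ G, ((((indepMod t U ⊥ ×ˢ indepMod m ⊤ V).filter fun p =>
      span (ZMod 2) (Set.range p.1) ⊔ span (ZMod 2) (Set.range p.2) = A).card : ℕ) : ℝ) =
      (∏ j ∈ Finset.range t, ((2 : ℝ) ^ t - 2 ^ j)) *
        ∏ j ∈ Finset.range m, ((2 : ℝ) ^ (t + m) - 2 ^ (t + j)) := by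
    intro A hA
    obtain ⟨hA1, hA2, hA3⟩ := (Finset.mem_filter.1 hA).2
    have : (indepMod t U ⊥ ×ˢ indepMod m ⊤ V).filter (fun p =>
        span (ZMod 2) (Set.range p.1) ⊔ span (ZMod 2) (Set.range p.2) = A) =
        indepMod t (A ⊓ U) ⊥ ×ˢ indepMod m A V := by
      ext ⟨x, y⟩
      rw [Finset.mem_filter, Finset.mem_product, Finset.mem_product]
      constructor
      · rintro ⟨⟨hx, hy⟩, h⟩
        obtain ⟨h1, h2⟩ := (sup_span_eq_iff hUV hA1 hx hy).1 h
        rw [mem_indepMod] at hx hy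
        exact ⟨mem_indepMod.2 ⟨fun j => ⟨h1 j, hx.1 j⟩, hx.2⟩, mem_indepMod.2 ⟨h2, hy.2⟩⟩
      · rintro ⟨hx, hy⟩
        rw [mem_indepMod] at hx hy
        have hx' : x ∈ indepMod t U ⊥ := mem_indepMod.2 ⟨fun j => (hx.1 j).2, hx.2⟩
        have hy' : y ∈ indepMod m ⊤ V := mem_indepMod.2 ⟨fun _ => mem_top, hy.2⟩
        exact ⟨⟨hx', hy'⟩, (sup_span_eq_iff hUV hA1 hx' hy').2 ⟨fun j => (hx.1 j).1, hy.1⟩⟩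
    rw [this, Finset.card_product, Nat.cast_mul, card_indepMod, card_indepMod, hA1, hA2, hA3,
      inf_bot_eq, finrank_bot]
    simp only [zero_add]
  have hcard : Nat.card {A : Submodule (ZMod 2) F // finrank (ZMod 2) A = t + m ∧
      finrank (ZMod 2) ↥(A ⊓ U) = t ∧ finrank (ZMod 2) ↥(A ⊓ V) = t} = G.card := by
    rw [Nat.card_eq_fintype_card, Fintype.card_subtype]
  have hreal := congrArg (Nat.cast : ℕ → ℝ) hcount
  rw [Nat.cast_sum, Finset.sum_congr rfl hfib, Finset.sum_const, nsmul_eq_mul,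
    Finset.card_product, Nat.cast_mul, card_indepMod, card_indepMod, inf_bot_eq, top_inf_eq,
    finrank_bot, finrank_top] at hreal
  simp only [zero_add] at hreal
  rw [hcard, hreal]

end Frames

theorem finrank_Ej {ℓ j : ℕ} (h : j ≤ ℓ) : Module.finrank (ZMod 2) ↥(Ej ℓ j) = j := by
  have hE : Ej ℓ j = Submodule.span (ZMod 2)
      (Set.range (Pi.basisFun (ZMod 2) (Fin ℓ) ∘ Fin.castLE h)) := by
    unfold Ej
    congr 1
    ext v
    constructor
    · rintro ⟨k, hk, rfl⟩
      exact ⟨⟨k, hk⟩, by simp⟩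
    · rintro ⟨k, rfl⟩
      exact ⟨Fin.castLE h k, k.2, by simp⟩
  have hli := (Pi.basisFun (ZMod 2) (Fin ℓ)).linearIndependent.comp _ (Fin.castLE_injective h)
  rw [hE]
  simpa using finrank_span_eq_card hli

theorem Ej_mono {ℓ j k : ℕ} (h : j ≤ k) : Ej ℓ j ≤ Ej ℓ k :=
  Submodule.span_mono fun _ ⟨a, ha, hv⟩ => ⟨a, ha.trans_le h, hv⟩

theorem two_pow_sub_ne_zero {a b : ℕ} (h : b < a) : (2 : ℝ) ^ a - 2 ^ b ≠ 0 :=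
  (sub_pos.2 (pow_lt_pow_right₀ one_lt_two h)).ne'

theorem stmt10 (ℓ i s t : ℕ) (hℓ : 1 ≤ ℓ) (hi : 1 ≤ i) (hiℓ : i ≤ ℓ) (hs : s ≤ ℓ)
    (ht₁ : i - s ≤ t) (ht₂ : t ≤ min (ℓ - s) (i - 1)) :
    (Nat.card {A : Submodule (ZMod 2) (Fin ℓ → ZMod 2) //
        Module.finrank (ZMod 2) ↥A = ℓ - s ∧
        Module.finrank (ZMod 2) ↥(A ⊓ Ej ℓ (i - 1)) = t ∧
        Module.finrank (ZMod 2) ↥(A ⊓ Ej ℓ i) = t} : ℝ) =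
      gaussBinom (i - 1) t *
        ∏ j ∈ Finset.range (ℓ - s - t),
          ((2 ^ ℓ - 2 ^ (i + j) : ℝ) / (2 ^ (ℓ - s) - 2 ^ (t + j) : ℝ)) := by
  obtain ⟨m, hm⟩ := Nat.exists_eq_add_of_le (ht₂.trans (min_le_left _ _))
  have key := card_mul_frames (t := t) (m := m) (Ej_mono (ℓ := ℓ) (Nat.sub_le i 1))
  rw [finrank_Ej hiℓ, finrank_Ej ((Nat.sub_le i 1).trans hiℓ), Module.finrank_fin_fun] at key
  rw [hm, Nat.add_sub_cancel_left, gaussBinom, Finset.prod_div_distrib, Finset.prod_div_distrib,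
    div_mul_div_comm, eq_div_iff]
  · exact key
  · refine mul_ne_zero (Finset.prod_ne_zero_iff.2 fun j hj => ?_)
      (Finset.prod_ne_zero_iff.2 fun j hj => ?_)
    · exact two_pow_sub_ne_zero (Finset.mem_range.1 hj)
    · exact two_pow_sub_ne_zero (Nat.add_lt_add_left (Finset.mem_range.1 hj) t)

end
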